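/- Let n, r be positive integers, D a symmetric n×n real matrix, μ a real number, and Φ, V₁ n×r real matrices with ΦᵀΦ = I_r and V₁ᵀV₁ = I_r. Suppose q̂, p̂, ŵ : ℝ → ℝʳ are differentiable and satisfy for all t the parametric quadratic ROM q̂′ = p̂, p̂′ = (ΦᵀDΦ) q̂ − μ Φᵀ(V₁ŵ ⊙ Φq̂), ŵ′ = 2 V₁ᵀ(Φq̂ ⊙ Φp̂). Then the lifted energy along the reconstructed trajectory, t ↦ ½ (Φp̂(t))ᵀ(Φp̂(t)) − ½ (Φq̂(t))ᵀD(Φq̂(t)) + (μ/4) (V₁ŵ(t))ᵀ(V₁ŵ(t)), is constant in t. -/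

import Mathlib

/-!
Orthonormality of the columns of `Φ` and `V₁` turns the reconstructed energy into
`½ p̂ᵀp̂ - ½ (Φq̂)ᵀD(Φq̂) + (μ/4) ŵᵀŵ`. Its derivative along the ROM is
`p̂ᵀp̂' - (Φp̂)ᵀD(Φq̂) + (μ/2) ŵᵀŵ'`, using symmetry of `D`. Moving the projections `Φᵀ`, `V₁ᵀ`
across the dot products, the `D`-terms cancel, and what remains is
`-μ (Φp̂)ᵀ(V₁ŵ ⊙ Φq̂) + μ (V₁ŵ)ᵀ(Φq̂ ⊙ Φp̂) = 0`, since both triple products are the same sum.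
A function on `ℝ` with zero derivative is constant.
-/

open Matrix BigOperators

lemma hasDerivAt_dotProduct {m : ℕ} {u v : ℝ → Fin m → ℝ} {u' v' : Fin m → ℝ} {t : ℝ}
    (hu : HasDerivAt u u' t) (hv : HasDerivAt v v' t) :
    HasDerivAt (fun x => u x ⬝ᵥ v x) (u' ⬝ᵥ v t + u t ⬝ᵥ v') t := by
  simp only [dotProduct, ← Finset.sum_add_distrib]
  exact HasDerivAt.fun_sum fun i _ => (hasDerivAt_pi.1 hu i).mul (hasDerivAt_pi.1 hv i)

lemma hasDerivAt_mulVec {k m : ℕ} (A : Matrix (Fin k) (Fin m) ℝ) {u : ℝ → Fin m → ℝ}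
    {u' : Fin m → ℝ} {t : ℝ} (hu : HasDerivAt u u' t) :
    HasDerivAt (fun x => A.mulVec (u x)) (A.mulVec u') t := by
  refine hasDerivAt_pi.2 fun i => ?_
  simp only [mulVec, dotProduct]
  exact HasDerivAt.fun_sum fun j _ => (hasDerivAt_pi.1 hu j).const_mul (A i j)

lemma dotProduct_transpose_mulVec' {k m : ℕ} (A : Matrix (Fin k) (Fin m) ℝ) (x : Fin m → ℝ)
    (y : Fin k → ℝ) : x ⬝ᵥ Aᵀ.mulVec y = A.mulVec x ⬝ᵥ y := by
  rw [dotProduct_mulVec, vecMul_transpose]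

/-- A matrix with orthonormal columns preserves the Euclidean form. -/
lemma mulVec_dotProduct_mulVec_of_orthonormal {k m : ℕ} {A : Matrix (Fin k) (Fin m) ℝ}
    (hA : Aᵀ * A = 1) (x : Fin m → ℝ) : A.mulVec x ⬝ᵥ A.mulVec x = x ⬝ᵥ x := by
  rw [← dotProduct_transpose_mulVec', mulVec_mulVec, hA, one_mulVec]

/-- The parametric quadratic ROM of the lifted Klein-Gordon equation conserves the lifted
energy along the reconstructed trajectory. -/
theorem klein_gordon_rom_conserves_energy
    (n r : ℕ) (hn : 0 < n) (hr : 0 < r)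
    (D : Matrix (Fin n) (Fin n) ℝ) (hD : D.IsSymm)
    (μ : ℝ)
    (Φ V₁ : Matrix (Fin n) (Fin r) ℝ)
    (hΦ : Φᵀ * Φ = 1) (hV₁ : V₁ᵀ * V₁ = 1)
    (qh ph wh : ℝ → Fin r → ℝ)
    (hq : ∀ t, HasDerivAt qh (ph t) t)
    (hp : ∀ t, HasDerivAt ph
      ((Φᵀ * D * Φ).mulVec (qh t)
        - μ • Φᵀ.mulVec (fun i => V₁.mulVec (wh t) i * Φ.mulVec (qh t) i)) t)
    (hw : ∀ t, HasDerivAt wh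
      ((2 : ℝ) • V₁ᵀ.mulVec (fun i => Φ.mulVec (qh t) i * Φ.mulVec (ph t) i)) t) :
    ∀ s t : ℝ,
      (1 / 2) * (Φ.mulVec (ph s) ⬝ᵥ Φ.mulVec (ph s))
        - (1 / 2) * (Φ.mulVec (qh s) ⬝ᵥ D.mulVec (Φ.mulVec (qh s)))
        + (μ / 4) * (V₁.mulVec (wh s) ⬝ᵥ V₁.mulVec (wh s))
      = (1 / 2) * (Φ.mulVec (ph t) ⬝ᵥ Φ.mulVec (ph t))
        - (1 / 2) * (Φ.mulVec (qh t) ⬝ᵥ D.mulVec (Φ.mulVec (qh t)))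
        + (μ / 4) * (V₁.mulVec (wh t) ⬝ᵥ V₁.mulVec (wh t)) := by
  simp only [mulVec_dotProduct_mulVec_of_orthonormal hΦ,
    mulVec_dotProduct_mulVec_of_orthonormal hV₁]
  have hderiv : ∀ x, HasDerivAt (fun t => (1 / 2) * (ph t ⬝ᵥ ph t)
      - (1 / 2) * (Φ.mulVec (qh t) ⬝ᵥ D.mulVec (Φ.mulVec (qh t)))
      + (μ / 4) * (wh t ⬝ᵥ wh t)) 0 x := by
    intro x
    have hΦq := hasDerivAt_mulVec Φ (hq x)
    have h := (((hasDerivAt_dotProduct (hp x) (hp x)).const_mul (1 / 2 : ℝ)).sub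
      ((hasDerivAt_dotProduct hΦq (hasDerivAt_mulVec D hΦq)).const_mul (1 / 2 : ℝ))).add
      ((hasDerivAt_dotProduct (hw x) (hw x)).const_mul (μ / 4))
    refine h.congr_deriv ?_
    have hsymm : Φ.mulVec (qh x) ⬝ᵥ D.mulVec (Φ.mulVec (ph x))
        = Φ.mulVec (ph x) ⬝ᵥ D.mulVec (Φ.mulVec (qh x)) := by
      rw [dotProduct_comm, ← dotProduct_transpose_mulVec' D, hD.eq]
    have htriple : Φ.mulVec (ph x) ⬝ᵥ (fun i => V₁.mulVec (wh x) i * Φ.mulVec (qh x) i)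
        = V₁.mulVec (wh x) ⬝ᵥ (fun i => Φ.mulVec (qh x) i * Φ.mulVec (ph x) i) := by
      simp only [dotProduct]
      exact Finset.sum_congr rfl fun i _ => by ring
    rw [dotProduct_comm _ (ph x), dotProduct_comm _ (wh x)]
    simp only [dotProduct_sub, dotProduct_smul, dotProduct_transpose_mulVec', smul_eq_mul,
      ← mulVec_mulVec, hsymm, htriple]
    ring
  intro s t
  exact is_const_of_deriv_eq_zero (fun x => (hderiv x).differentiableAt)
    (fun x => (hderiv x).deriv) s t
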